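/- Let μ ∈ ℝ, set α := −iμ/2, and let u : ℝ → ℂ be a smooth solution of the PII equation u''(x) = x·u(x) + 2·u(x)³ − α on ℝ, taking purely imaginary values on ℝ and satisfying the asymptotic expansion (A+): there exist x₀, K > 0 such that |u(x) − α/x − 2α(1−α²)·x^{−4} − 4α(1−α²)(10−3α²)·x^{−7}| ≤ K·x^{−10} for all x ≥ x₀. Define w(x) := ∫₀ˣ exp( (2/3^{1/3}) ∫₀^y u(z/3^{1/3}) dz ) dy − C with C := (2·3^{1/3}/(1−iμ))·(u'(0) − u(0)²), and g(x) := e^{iμ·ln|x|}·w(x)/x for x ≠ 0. Then there exists θ̃₊ ∈ [0,2π) such that g(x) = Ã₀ + Ã₁·x^{−3} + Ã₂·x^{−6} + O(x^{−9}) as x → +∞, where Ã₀ := (1+μ²)^{−1/2}·e^{iθ̃₊}, Ã₁ := (iμ−1)·(iμ+μ²/2)·Ã₀, and Ã₂ := (2+iμ)·(μ²/4 − iμ + 6)·Ã₁. -/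

import Mathlib

/-!
Write `G = exp (2 ∫ u)`. Along a solution of the second Painlevé equation the Miura transform
`m = u' - u²` satisfies `m' + 2 u m = s u - α`, so that `(1 + 2α) G` is the derivative of
`G (s - 2 m)`. The integral of `G` is therefore explicit, and the constant `C` in the definition of
`w` cancels the boundary term at `0`: after the scaling `x = 3^{1/3} s`, the function `g` is a
constant multiple of `F(s) = s^{-2α} G(s) (1 - 2 m(s) / s)`.

Its derivative is `F' = 2 (1 + 2α) s⁻² m s^{-2α} G`, so the expansion of `F` follows by termwise
integration from shorter expansions of `m` and of `s^{-2α} G`. The former needs the expansion of `u`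
to be differentiated: the equation turns the expansion of `u` into one of `u''`, and a remainder `r`
with `r` and `r''` both `O(s⁻ⁿ)` has `r'` of the same order, because
`r'(s) = r(s+1) - r(s) + O(sup |r''|)`.

For imaginary `u` and `α` the weight `s^{-2α} G` has modulus one, and so has its limit. This gives
the modulus `|1 + 2α|⁻¹ = (1 + μ²)^{-1/2}` of the leading coefficient.
-/

/-- The real cube root of 3. -/
noncomputable def cbrt3 : ℝ := (3 : ℝ) ^ ((1:ℝ)/3)

open Asymptotics Filter MeasureTheory Polynomial Set Topology

section Calculus

variable {E F : Type*} [NormedAddCommGroup E] [NormedSpace ℝ E] [SeminormedAddCommGroup F]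

theorem norm_sub_sub_smul_deriv_le {f f' f'' : ℝ → E} {a b B : ℝ} (hab : a ≤ b)
    (hf : ∀ x ∈ Icc a b, HasDerivAt f (f' x) x) (hf' : ∀ x ∈ Icc a b, HasDerivAt f' (f'' x) x)
    (hB : ∀ x ∈ Icc a b, ‖f'' x‖ ≤ B) :
    ‖f b - f a - (b - a) • f' a‖ ≤ B * (b - a) ^ 2 := by
  have ha : a ∈ Icc a b := left_mem_Icc.2 hab
  have hB0 : 0 ≤ B := (norm_nonneg _).trans (hB a ha)
  have hslope : ∀ x ∈ Icc a b, ‖f' x - f' a‖ ≤ B * (b - a) := fun x hx => by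
    refine ((convex_Icc a b).norm_image_sub_le_of_norm_hasDerivWithin_le
      (fun y hy => (hf' y hy).hasDerivWithinAt) hB ha hx).trans ?_
    rw [Real.norm_of_nonneg (sub_nonneg.2 hx.1)]
    gcongr
    exact hx.2
  have hremainder : ∀ x ∈ Icc a b,
      HasDerivWithinAt (fun y => f y - (y - a) • f' a) (f' x - f' a) (Icc a b) x := fun x hx => by
    simpa using ((hf x hx).fun_sub
      (((hasDerivAt_id x).sub_const a).smul_const (f' a))).hasDerivWithinAt
  calc ‖f b - f a - (b - a) • f' a‖
      = ‖(f b - (b - a) • f' a) - (f a - (a - a) • f' a)‖ := by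
        congr 1
        module
    _ ≤ B * (b - a) * ‖b - a‖ := (convex_Icc a b).norm_image_sub_le_of_norm_hasDerivWithin_le
        hremainder hslope ha (right_mem_Icc.2 hab)
    _ = B * (b - a) ^ 2 := by
        rw [Real.norm_of_nonneg (sub_nonneg.2 hab)]
        ring

theorem isBigO_deriv_of_isBigO_of_isBigO_deriv2 {f f' f'' : ℝ → E} {g : ℝ → F} {a : ℝ}
    (hg : AntitoneOn (fun s => ‖g s‖) (Ici a)) (hf : ∀ᶠ s in atTop, HasDerivAt f (f' s) s)
    (hf' : ∀ᶠ s in atTop, HasDerivAt f' (f'' s) s) (hfg : f =O[atTop] g)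
    (hf''g : f'' =O[atTop] g) : f' =O[atTop] g := by
  obtain ⟨A, hA, hfA⟩ := hfg.exists_pos
  obtain ⟨B, hB, hfB⟩ := hf''g.exists_pos
  obtain ⟨X, hX⟩ := eventually_atTop.1
    (hf.and (hf'.and (hfA.bound.and (hfB.bound.and (eventually_ge_atTop a)))))
  refine IsBigO.of_bound (2 * A + B) ((eventually_ge_atTop X).mono fun s hs => ?_)
  have hgs : ∀ x, s ≤ x → ‖g x‖ ≤ ‖g s‖ := fun x hx =>
    hg (hX s hs).2.2.2.2 (hX x (hs.trans hx)).2.2.2.2 hx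
  have htaylor := norm_sub_sub_smul_deriv_le (le_add_of_nonneg_right zero_le_one)
    (fun x hx => (hX x (hs.trans hx.1)).1) (fun x hx => (hX x (hs.trans hx.1)).2.1)
    (B := B * ‖g s‖) (b := s + 1) fun x hx =>
      (hX x (hs.trans hx.1)).2.2.2.1.trans (by gcongr; exact hgs x hx.1)
  rw [add_sub_cancel_left, one_smul, one_pow, mul_one] at htaylor
  have hright : ‖f (s + 1)‖ ≤ A * ‖g s‖ :=
    (hX (s + 1) (by linarith)).2.2.1.trans (by gcongr; exact hgs _ (by linarith))
  calc ‖f' s‖ = ‖f (s + 1) - f s - (f (s + 1) - f s - f' s)‖ := by rw [sub_sub_cancel]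
    _ ≤ ‖f (s + 1)‖ + ‖f s‖ + ‖f (s + 1) - f s - f' s‖ :=
        (norm_sub_le _ _).trans (by gcongr; exact norm_sub_le _ _)
    _ ≤ A * ‖g s‖ + A * ‖g s‖ + B * ‖g s‖ := by
        gcongr
        exact (hX s hs).2.2.1
    _ = (2 * A + B) * ‖g s‖ := by ring

variable [CompleteSpace E] {f f' : ℝ → E} {r : ℝ}

theorem eventually_integrableOn_Ioi_of_hasDerivAt_of_isBigO_rpow (hr : r < -1)
    (hf : ∀ᶠ s in atTop, HasDerivAt f (f' s) s) (hf' : f' =O[atTop] fun s => s ^ r) :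
    ∀ᶠ a in atTop, IntegrableOn f' (Ioi a) := by
  obtain ⟨X, hX⟩ := eventually_atTop.1 hf
  have hmeas : StronglyMeasurableAtFilter f' atTop := by
    refine ⟨Ioi X, Ioi_mem_atTop X, (aestronglyMeasurable_deriv f _).congr ?_⟩
    exact (ae_restrict_mem measurableSet_Ioi).mono fun s hs => (hX s hs.le).deriv
  obtain ⟨a, ha⟩ := integrableAtFilter_atTop_iff.1
    (hf'.integrableAtFilter hmeas (integrableAtFilter_rpow_atTop_iff.2 hr))
  exact (eventually_ge_atTop a).mono fun b hb => ha.mono_set fun s hs => hb.trans hs.le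

theorem exists_tendsto_of_deriv_isBigO_rpow (hr : r < -1)
    (hf : ∀ᶠ s in atTop, HasDerivAt f (f' s) s) (hf' : f' =O[atTop] fun s => s ^ r) :
    ∃ L, Tendsto f atTop (𝓝 L) := by
  obtain ⟨X, hX⟩ := eventually_atTop.1
    (hf.and (eventually_integrableOn_Ioi_of_hasDerivAt_of_isBigO_rpow hr hf hf'))
  exact ⟨_, tendsto_limUnder_of_hasDerivAt_of_integrableOn_Ioi
    (fun s hs => (hX s (le_of_lt hs)).1) (hX X le_rfl).2⟩

theorem isBigO_sub_of_tendsto_of_deriv_isBigO_rpow {L : E} (hr : r < -1)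
    (hf : ∀ᶠ s in atTop, HasDerivAt f (f' s) s) (hf' : f' =O[atTop] fun s => s ^ r)
    (hL : Tendsto f atTop (𝓝 L)) : (fun s => f s - L) =O[atTop] fun s => s ^ (r + 1) := by
  obtain ⟨K, -, hfK⟩ := hf'.exists_pos
  obtain ⟨X, hX⟩ := eventually_atTop.1 (hf.and (hfK.bound.and
    ((eventually_integrableOn_Ioi_of_hasDerivAt_of_isBigO_rpow hr hf hf').and
      (eventually_gt_atTop 0))))
  refine IsBigO.of_bound (-(K / (r + 1))) ((eventually_ge_atTop X).mono fun s hs => ?_)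
  obtain ⟨hfs, -, hintegral, hs0⟩ := hX s hs
  have htail : ∫ t in Ioi s, f' t = L - f s := integral_Ioi_of_hasDerivAt_of_tendsto
    hfs.continuousAt.continuousWithinAt (fun t ht => (hX t (hs.trans (le_of_lt ht))).1) hintegral hL
  have hbound : ∀ᵐ t ∂volume.restrict (Ioi s), ‖f' t‖ ≤ K * t ^ r := by
    filter_upwards [ae_restrict_mem measurableSet_Ioi] with t ht
    have h := (hX t (hs.trans (le_of_lt ht))).2.1
    rwa [Real.norm_of_nonneg (Real.rpow_nonneg (hs0.trans ht).le r)] at h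
  calc ‖f s - L‖ = ‖∫ t in Ioi s, f' t‖ := by rw [htail, norm_sub_rev]
    _ ≤ ∫ t in Ioi s, K * t ^ r :=
        norm_integral_le_of_norm_le ((integrableOn_Ioi_rpow_of_lt hr hs0).const_mul K) hbound
    _ = -(K / (r + 1)) * ‖s ^ (r + 1)‖ := by
        rw [integral_const_mul, integral_Ioi_rpow_of_lt hr hs0,
          Real.norm_of_nonneg (Real.rpow_nonneg hs0.le _)]
        ring

end Calculus

/-- `f` has the asymptotic expansion `p(1/s) + O(s⁻ⁿ)` as `s → +∞`; the coefficients of `p` in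
degree `n` and above are immaterial. -/
def HasExpansionAtTop (f : ℝ → ℂ) (p : ℂ[X]) (n : ℕ) : Prop :=
  (fun s => f s - p.eval (s : ℂ)⁻¹) =O[atTop] fun s => s⁻¹ ^ n

theorem tendsto_ofReal_inv_atTop_zero : Tendsto (fun s : ℝ => (s : ℂ)⁻¹) atTop (𝓝 0) := by
  simpa [Function.comp_def] using
    (Complex.continuous_ofReal.tendsto 0).comp (tendsto_inv_atTop_zero (𝕜 := ℝ))

theorem tendsto_eval_inv_atTop (p : ℂ[X]) :
    Tendsto (fun s : ℝ => p.eval (s : ℂ)⁻¹) atTop (𝓝 (p.coeff 0)) := by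
  rw [coeff_zero_eq_eval_zero]
  exact (p.continuous.tendsto 0).comp tendsto_ofReal_inv_atTop_zero

theorem isBigO_inv_pow_of_le {m n : ℕ} (hmn : m ≤ n) :
    (fun s : ℝ => s⁻¹ ^ n) =O[atTop] fun s => s⁻¹ ^ m := by
  refine IsBigO.of_bound 1 ?_
  filter_upwards [eventually_ge_atTop 1] with s hs
  have hinv : 0 ≤ s⁻¹ := by positivity
  rw [one_mul, Real.norm_of_nonneg (by positivity), Real.norm_of_nonneg (by positivity)]
  exact pow_le_pow_of_le_one hinv (inv_le_one_of_one_le₀ hs) hmn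

theorem inv_pow_eventuallyEq_rpow_neg (n : ℕ) :
    (fun s : ℝ => s⁻¹ ^ n) =ᶠ[atTop] fun s => s ^ (-(n : ℝ)) := by
  filter_upwards [eventually_ge_atTop 0] with s hs
  rw [Real.rpow_neg hs, Real.rpow_natCast, inv_pow]

theorem isBigO_eval_X_pow_mul_inv (p : ℂ[X]) (k : ℕ) :
    (fun s : ℝ => (X ^ k * p).eval (s : ℂ)⁻¹) =O[atTop] fun s => s⁻¹ ^ k := by
  have hX : (fun s : ℝ => (s : ℂ)⁻¹ ^ k) =O[atTop] fun s => s⁻¹ ^ k :=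
    IsBigO.of_bound 1 (Eventually.of_forall fun s => by simp)
  simpa using hX.mul ((tendsto_eval_inv_atTop p).isBigO_one ℝ)

/-- The operator on polynomials in `X = 1/s` that corresponds to differentiation in `s`. -/
noncomputable def derivInv : ℂ[X] →ₗ[ℂ] ℂ[X] := -(LinearMap.mulLeft ℂ (X ^ 2) ∘ₗ derivative)

theorem derivInv_apply (p : ℂ[X]) : derivInv p = -(X ^ 2 * derivative p) := rfl

theorem derivInv_C (a : ℂ) : derivInv (C a) = 0 := by
  rw [derivInv_apply, derivative_C, mul_zero, neg_zero]

theorem derivInv_C_mul_X_pow (a : ℂ) (n : ℕ) :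
    derivInv (C a * X ^ n) = -((n : ℂ[X]) * C a * X ^ (n + 1)) := by
  rcases n with _ | n
  · simp [derivInv_apply]
  · rw [derivInv_apply, derivative_C_mul_X_pow, C_mul, map_natCast, Nat.add_sub_cancel]
    ring

theorem hasDerivAt_eval_inv (p : ℂ[X]) {s : ℝ} (hs : s ≠ 0) :
    HasDerivAt (fun t : ℝ => p.eval (t : ℂ)⁻¹)
      ((derivInv p).eval (s : ℂ)⁻¹) s := by
  have hs' : (s : ℂ) ≠ 0 := Complex.ofReal_ne_zero.2 hs
  refine ((p.hasDerivAt _).comp (s : ℂ) (hasDerivAt_inv hs')).comp_ofReal.congr_deriv ?_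
  simp only [derivInv_apply, eval_neg, eval_mul, eval_pow, eval_X, inv_pow]
  ring

theorem hasExpansionAtTop_iff {f : ℝ → ℂ} {p : ℂ[X]} {n : ℕ} :
    HasExpansionAtTop f p n ↔ ∃ x₀ : ℝ, 0 < x₀ ∧ ∃ K : ℝ, 0 < K ∧ ∀ x : ℝ, x₀ ≤ x →
      ‖f x - p.eval (x : ℂ)⁻¹‖ ≤ K * x ^ (-n : ℤ) := by
  have hnorm : ∀ x : ℝ, 0 < x → ‖x⁻¹ ^ n‖ = x ^ (-n : ℤ) := fun x hx => by
    rw [Real.norm_of_nonneg (by positivity), zpow_neg, zpow_natCast, inv_pow]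
  constructor
  · intro h
    obtain ⟨K, hK, hfK⟩ := h.exists_pos
    obtain ⟨x₀, hx₀⟩ := eventually_atTop.1 hfK.bound
    refine ⟨max x₀ 1, by positivity, K, hK, fun x hx => ?_⟩
    rw [← hnorm x (one_pos.trans_le (le_of_max_le_right hx))]
    exact hx₀ x (le_of_max_le_left hx)
  · rintro ⟨x₀, hx₀, K, -, hK⟩
    refine IsBigO.of_bound K ((eventually_ge_atTop x₀).mono fun x hx => ?_)
    rw [hnorm x (hx₀.trans_le hx)]
    exact hK x hx

namespace HasExpansionAtTop

variable {f g f' f'' : ℝ → ℂ} {p q : ℂ[X]} {k m n : ℕ}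

theorem congr' (hf : HasExpansionAtTop f p n) (hfg : f =ᶠ[atTop] g) : HasExpansionAtTop g p n :=
  IsBigO.congr' hf (hfg.mono fun s hs => by simp only [hs]) EventuallyEq.rfl

theorem eval_inv (p : ℂ[X]) (n : ℕ) : HasExpansionAtTop (fun s => p.eval (s : ℂ)⁻¹) p n := by
  simpa only [HasExpansionAtTop, sub_self] using isBigO_zero _ _

theorem mono (hf : HasExpansionAtTop f p n) (hmn : m ≤ n) : HasExpansionAtTop f p m :=
  hf.trans (isBigO_inv_pow_of_le hmn)

theorem congr_poly (hf : HasExpansionAtTop f p n) (hpq : X ^ n ∣ p - q) :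
    HasExpansionAtTop f q n := by
  obtain ⟨d, hd⟩ := hpq
  refine (hf.add (isBigO_eval_X_pow_mul_inv d n)).congr_left fun s => ?_
  rw [← hd, eval_sub]
  ring

theorem add (hf : HasExpansionAtTop f p n) (hg : HasExpansionAtTop g q n) :
    HasExpansionAtTop (fun s => f s + g s) (p + q) n := by
  refine (IsBigO.add hf hg).congr_left fun s => ?_
  rw [eval_add]
  ring

theorem neg (hf : HasExpansionAtTop f p n) : HasExpansionAtTop (fun s => -f s) (-p) n := by
  refine (IsBigO.neg_left hf).congr_left fun s => ?_
  rw [eval_neg]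
  ring

theorem sub (hf : HasExpansionAtTop f p n) (hg : HasExpansionAtTop g q n) :
    HasExpansionAtTop (fun s => f s - g s) (p - q) n := by
  simpa only [sub_eq_add_neg] using hf.add hg.neg

theorem isBigO_one (hf : HasExpansionAtTop f p n) : f =O[atTop] fun _ => (1 : ℝ) := by
  simpa using IsBigO.add (hf.mono n.zero_le) ((tendsto_eval_inv_atTop p).isBigO_one ℝ)

theorem tendsto (hf : HasExpansionAtTop f p n) (hn : n ≠ 0) :
    Tendsto f atTop (𝓝 (p.coeff 0)) := by
  have hzero : Tendsto (fun s : ℝ => s⁻¹ ^ n) atTop (𝓝 0) := by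
    simpa [hn] using (tendsto_inv_atTop_zero (𝕜 := ℝ)).pow n
  simpa using (hf.trans_tendsto hzero).add (tendsto_eval_inv_atTop p)

theorem X_pow_mul_mul (hf : HasExpansionAtTop f (X ^ k * p) (k + n))
    (hg : HasExpansionAtTop g q n) :
    HasExpansionAtTop (fun s => f s * g s) (X ^ k * (p * q)) (k + n) := by
  have hleft : (fun s => (f s - (X ^ k * p).eval (s : ℂ)⁻¹) * g s) =O[atTop]
      fun s => s⁻¹ ^ (k + n) := by
    simpa using IsBigO.mul hf hg.isBigO_one
  have hright : (fun s : ℝ => (X ^ k * p).eval (s : ℂ)⁻¹ * (g s - q.eval (s : ℂ)⁻¹)) =O[atTop]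
      fun s => s⁻¹ ^ (k + n) := by
    simpa only [pow_add] using (isBigO_eval_X_pow_mul_inv p k).mul hg
  refine (hleft.add hright).congr_left fun s => ?_
  rw [← mul_assoc, eval_mul (p := X ^ k * p)]
  ring

theorem mul (hf : HasExpansionAtTop f p n) (hg : HasExpansionAtTop g q n) :
    HasExpansionAtTop (fun s => f s * g s) (p * q) n := by
  have hprod := X_pow_mul_mul (k := 0) (p := p) (by simpa using hf) hg
  simpa using hprod

theorem pow (hf : HasExpansionAtTop f p n) (k : ℕ) :
    HasExpansionAtTop (fun s => f s ^ k) (p ^ k) n := by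
  induction k with
  | zero => simpa using eval_inv 1 n
  | succ k ih => simpa only [pow_succ] using ih.mul hf

theorem const_mul (c : ℂ) (hf : HasExpansionAtTop f p n) :
    HasExpansionAtTop (fun s => c * f s) (C c * p) n := by
  simpa using (eval_inv (C c) n).mul hf

theorem ofReal_mul (hf : HasExpansionAtTop f p (n + 1)) (hp : p.coeff 0 = 0) :
    HasExpansionAtTop (fun s => s * f s) p.divX n := by
  have hdivX : p = X * p.divX := by
    simpa [hp] using (X_mul_divX_add p).symm
  have hs : (fun s : ℝ => (s : ℂ)) =O[atTop] fun s : ℝ => s :=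
    IsBigO.of_bound 1 (Eventually.of_forall fun s => by simp)
  refine (hs.mul hf).congr' ?_ ?_
  · filter_upwards [eventually_ne_atTop 0] with s hs0
    have hs0' : (s : ℂ) ≠ 0 := Complex.ofReal_ne_zero.2 hs0
    rw [hdivX, eval_mul, eval_X, ← hdivX]
    field_simp
  · filter_upwards [eventually_ne_atTop 0] with s hs0
    rw [pow_succ', mul_inv_cancel_left₀ hs0]

theorem comp_div {c : ℝ} (hf : HasExpansionAtTop f p n) (hc : 0 < c) :
    HasExpansionAtTop (fun x => f (x / c)) (p.comp (C (c : ℂ) * X)) n := by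
  refine ((hf.comp_tendsto (tendsto_id.atTop_div_const hc)).congr_left fun x => ?_).trans
    (IsBigO.of_bound (c ^ n) (Eventually.of_forall fun x => ?_))
  · simp [eval_comp, div_eq_mul_inv]
  · simp [div_eq_mul_inv, mul_pow, abs_of_pos hc]

theorem of_hasDerivAt_of_hasDerivAt (hp : HasExpansionAtTop f p n)
    (hf : ∀ᶠ s in atTop, HasDerivAt f (f' s) s) (hf' : ∀ᶠ s in atTop, HasDerivAt f' (f'' s) s)
    (hf'' : HasExpansionAtTop f'' (derivInv (derivInv p)) n) :
    HasExpansionAtTop f' (derivInv p) n := by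
  have hne := eventually_ne_atTop (0 : ℝ)
  have hanti : AntitoneOn (fun s : ℝ => ‖s⁻¹ ^ n‖) (Ici 1) := fun s hs t ht hst => by
    have hs0 : 0 < s := one_pos.trans_le hs
    have ht0 : 0 < t := one_pos.trans_le ht
    simp only [norm_pow, norm_inv, Real.norm_of_nonneg hs0.le, Real.norm_of_nonneg ht0.le]
    gcongr
  refine isBigO_deriv_of_isBigO_of_isBigO_deriv2 hanti
    ((hf.and hne).mono fun s hs => hs.1.fun_sub (hasDerivAt_eval_inv p hs.2))
    ((hf'.and hne).mono fun s hs =>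
      hs.1.fun_sub (hasDerivAt_eval_inv (derivInv p) hs.2)) hp hf''

theorem exists_tendsto_of_hasDerivAt (hf : ∀ᶠ s in atTop, HasDerivAt f (f' s) s)
    (hf' : HasExpansionAtTop f' 0 2) : ∃ L, Tendsto f atTop (𝓝 L) := by
  refine exists_tendsto_of_deriv_isBigO_rpow (r := -2) (by norm_num) hf ?_
  simpa [HasExpansionAtTop] using hf'.trans_eventuallyEq (inv_pow_eventuallyEq_rpow_neg 2)

theorem of_hasDerivAt_of_tendsto {L : ℂ} (hf : ∀ᶠ s in atTop, HasDerivAt f (f' s) s)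
    (hL : Tendsto f atTop (𝓝 L)) (hp0 : p.coeff 0 = L)
    (hp : HasExpansionAtTop f' (derivInv p) (n + 2)) :
    HasExpansionAtTop f p (n + 1) := by
  have hrem : (fun s => f s - p.eval (s : ℂ)⁻¹ - 0) =O[atTop]
      fun s : ℝ => s ^ (-((n + 2 : ℕ) : ℝ) + 1) := by
    refine isBigO_sub_of_tendsto_of_deriv_isBigO_rpow (by push_cast; linarith)
      ((hf.and (eventually_ne_atTop 0)).mono fun s hs =>
        hs.1.fun_sub (hasDerivAt_eval_inv p hs.2))
      (hp.trans_eventuallyEq (inv_pow_eventuallyEq_rpow_neg _)) ?_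
    simpa [hp0] using hL.sub (tendsto_eval_inv_atTop p)
  refine (hrem.trans_eventuallyEq ?_).congr_left fun s => sub_zero _
  convert (inv_pow_eventuallyEq_rpow_neg (n + 1)).symm using 3
  push_cast
  ring

end HasExpansionAtTop

open Complex (I exp)

/-- `u` solves the second Painlevé equation with parameter `α` on `ℝ`, and `u'` is its
derivative. -/
structure IsPainleveIISolution (α : ℂ) (u u' : ℝ → ℂ) : Prop where
  hasDerivAt (s : ℝ) : HasDerivAt u (u' s) s
  hasDerivAt_deriv (s : ℝ) : HasDerivAt u' (s * u s + 2 * u s ^ 3 - α) s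

/-- The Miura transform `u' - u²`, which satisfies a linear equation along solutions of the second
Painlevé equation. -/
def miura (u u' : ℝ → ℂ) (s : ℝ) : ℂ := u' s - u s ^ 2

/-- The weight `G(s) = exp (2 ∫₀ˢ u)`, whose integral is the function `w` up to scaling. -/
noncomputable def expPrimitive (u : ℝ → ℂ) (s : ℝ) : ℂ := exp (2 * ∫ t in (0 : ℝ)..s, u t)

/-- The weight `s^{-2a} G(s)`, which has a limit at `+∞` if `u ~ a / s`. The power is written inside
the exponential, with the real logarithm. -/
noncomputable def normalizedExpPrimitive (a : ℂ) (u : ℝ → ℂ) (s : ℝ) : ℂ :=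
  exp (2 * (∫ t in (0 : ℝ)..s, u t) - 2 * a * Real.log s)

/-- The function `s^{-1-2α} G(s) (s - 2(u' - u²))`: the explicit antiderivative of `(1 + 2α) G`,
normalized to have a limit at `+∞`. -/
noncomputable def normalizedAntideriv (α : ℂ) (u u' : ℝ → ℂ) (s : ℝ) : ℂ :=
  normalizedExpPrimitive α u s * (1 - 2 * miura u u' s * (s : ℂ)⁻¹)

section Weights

variable {a : ℂ} {u : ℝ → ℂ}

theorem hasDerivAt_expPrimitive (hu : Continuous u) (s : ℝ) :
    HasDerivAt (expPrimitive u) (2 * u s * expPrimitive u s) s :=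
  ((hu.integral_hasStrictDerivAt 0 s).hasDerivAt.const_mul 2).cexp.congr_deriv (mul_comm _ _)

theorem hasDerivAt_two_mul_integral_sub_log (a : ℂ) (hu : Continuous u) {s : ℝ} (hs : s ≠ 0) :
    HasDerivAt (fun s : ℝ => 2 * (∫ t in (0 : ℝ)..s, u t) - 2 * a * Real.log s)
      (2 * u s - 2 * a * (s : ℂ)⁻¹) s :=
  (((hu.integral_hasStrictDerivAt 0 s).hasDerivAt.const_mul 2).fun_sub
    ((Real.hasDerivAt_log hs).ofReal_comp.const_mul (2 * a))).congr_deriv (by push_cast; rfl)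

theorem hasDerivAt_normalizedExpPrimitive (a : ℂ) (hu : Continuous u) {s : ℝ} (hs : s ≠ 0) :
    HasDerivAt (normalizedExpPrimitive a u)
      ((2 * u s - 2 * a * (s : ℂ)⁻¹) * normalizedExpPrimitive a u s) s :=
  (hasDerivAt_two_mul_integral_sub_log a hu hs).cexp.congr_deriv (mul_comm _ _)

theorem norm_normalizedExpPrimitive (ha : a.re = 0) (hu : ∀ t, (u t).re = 0) (s : ℝ) :
    ‖normalizedExpPrimitive a u s‖ = 1 := by
  have hintegral : ∫ t in (0 : ℝ)..s, u t = ((∫ t in (0 : ℝ)..s, (u t).im : ℝ) : ℂ) * I := by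
    rw [← intervalIntegral.integral_ofReal, ← intervalIntegral.integral_mul_const]
    congr 1 with t
    apply Complex.ext <;> simp [hu]
  simp [normalizedExpPrimitive, Complex.norm_exp, hintegral, ha]

theorem hasExpansionAtTop_two_mul_sub {q : ℂ[X]} {n : ℕ}
    (hu : HasExpansionAtTop u (C a * X + q) n) :
    HasExpansionAtTop (fun s => 2 * u s - 2 * a * (s : ℂ)⁻¹) (C 2 * q) n := by
  have hsub := (hu.const_mul 2).sub (HasExpansionAtTop.eval_inv (C (2 * a) * X) n)
  convert hsub using 1
  · simp
  · rw [C_mul]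
    ring

theorem exists_tendsto_normalizedExpPrimitive (hu : Continuous u)
    (hexp : HasExpansionAtTop u (C a * X) 2) :
    ∃ Λ, Tendsto (normalizedExpPrimitive a u) atTop (𝓝 Λ) := by
  have hderiv := hasExpansionAtTop_two_mul_sub (q := 0) (by simpa using hexp)
  obtain ⟨L, hL⟩ := HasExpansionAtTop.exists_tendsto_of_hasDerivAt
    ((eventually_ne_atTop 0).mono fun s hs => hasDerivAt_two_mul_integral_sub_log a hu hs)
    (by simpa using hderiv)
  exact ⟨exp L, hL.cexp⟩

theorem hasExpansionAtTop_normalizedExpPrimitive {b Λ : ℂ} (hu : Continuous u)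
    (hexp : HasExpansionAtTop u (C a * X + C (3 * b) * X ^ 4) 7)
    (hΛ : Tendsto (normalizedExpPrimitive a u) atTop (𝓝 Λ)) :
    HasExpansionAtTop (normalizedExpPrimitive a u) (C Λ - C (2 * b * Λ) * X ^ 3) 6 := by
  have hderiv : ∀ᶠ s in atTop, HasDerivAt (normalizedExpPrimitive a u) _ s :=
    (eventually_ne_atTop 0).mono fun s hs => hasDerivAt_normalizedExpPrimitive a hu hs
  have hfactor : HasExpansionAtTop (fun s => 2 * u s - 2 * a * (s : ℂ)⁻¹)
      (X ^ 4 * C (6 * b)) 7 := by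
    convert hasExpansionAtTop_two_mul_sub hexp using 1
    rw [X_pow_mul, ← mul_assoc, ← C_mul]
    ring_nf
  have hzero : HasExpansionAtTop (normalizedExpPrimitive a u) 0 0 := by
    simpa [HasExpansionAtTop] using hΛ.isBigO_one ℝ
  have hconst : HasExpansionAtTop (normalizedExpPrimitive a u) (C Λ) 3 :=
    .of_hasDerivAt_of_tendsto hderiv hΛ coeff_C_zero
      (by simpa [derivInv_C] using
        (hfactor.mono (show 4 ≤ 7 by norm_num)).X_pow_mul_mul (n := 0) hzero)
  refine .of_hasDerivAt_of_tendsto hderiv hΛ (by simp) ?_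
  convert hfactor.X_pow_mul_mul (n := 3) hconst using 1
  rw [map_sub, derivInv_C, derivInv_C_mul_X_pow]
  simp only [C_mul, C_ofNat]
  push_cast
  ring

theorem integral_exp_integral_comp_div {c : ℝ} (hc : c ≠ 0) (u : ℝ → ℂ) (x : ℝ) :
    ∫ y in (0 : ℝ)..x, exp (((2 / c : ℝ) : ℂ) * ∫ z in (0 : ℝ)..y, u (z / c)) =
      c * ∫ t in (0 : ℝ)..x / c, expPrimitive u t := by
  have hc' : (c : ℂ) ≠ 0 := Complex.ofReal_ne_zero.2 hc
  have hweight : ∀ y : ℝ, exp (((2 / c : ℝ) : ℂ) * ∫ z in (0 : ℝ)..y, u (z / c)) =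
      expPrimitive u (y / c) := fun y => by
    rw [expPrimitive, intervalIntegral.integral_comp_div _ hc, zero_div, Complex.real_smul,
      Complex.ofReal_div, ← mul_assoc, div_mul_cancel₀ _ hc', Complex.ofReal_ofNat]
  simp only [hweight]
  rw [intervalIntegral.integral_comp_div _ hc, zero_div, Complex.real_smul]

end Weights

/-- The formal solution `α/s + 2α(1-α²)/s⁴ + 4α(1-α²)(10-3α²)/s⁷` of the second Painlevé equation
modulo `s⁻¹⁰`, as a polynomial in `1/s`. -/
noncomputable def painleveIISeries (α : ℂ) : ℂ[X] :=
  C α * X ^ 1 + C (2 * α * (1 - α ^ 2)) * X ^ 4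
    + C (4 * α * (1 - α ^ 2) * (10 - 3 * α ^ 2)) * X ^ 7

theorem derivInv_painleveIISeries (α : ℂ) :
    derivInv (painleveIISeries α) = -(C α * X ^ 2) - C (8 * α * (1 - α ^ 2)) * X ^ 5
      - C (28 * α * (1 - α ^ 2) * (10 - 3 * α ^ 2)) * X ^ 8 := by
  simp only [painleveIISeries, map_add, derivInv_C_mul_X_pow]
  simp only [C_mul, C_ofNat]
  push_cast
  ring

theorem derivInv_derivInv_painleveIISeries (α : ℂ) :
    derivInv (derivInv (painleveIISeries α)) = C (2 * α) * X ^ 3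
      + C (40 * α * (1 - α ^ 2)) * X ^ 6
      + C (224 * α * (1 - α ^ 2) * (10 - 3 * α ^ 2)) * X ^ 9 := by
  simp only [derivInv_painleveIISeries, map_sub, map_neg, derivInv_C_mul_X_pow]
  simp only [C_mul, C_ofNat]
  push_cast
  ring

theorem divX_painleveIISeries (α : ℂ) :
    (painleveIISeries α).divX = C α + C (2 * α * (1 - α ^ 2)) * X ^ 3
      + C (4 * α * (1 - α ^ 2) * (10 - 3 * α ^ 2)) * X ^ 6 := by
  simp only [painleveIISeries, divX_add, divX_C_mul, divX_X_pow]
  simp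

theorem X_pow_nine_dvd_painleveII_sub_derivInv (α : ℂ) :
    X ^ 9 ∣ (painleveIISeries α).divX + 2 * painleveIISeries α ^ 3 - C α
      - derivInv (derivInv (painleveIISeries α)) := by
  rw [derivInv_derivInv_painleveIISeries, divX_painleveIISeries, painleveIISeries]
  set b := C (2 * α * (1 - α ^ 2)) with hb
  set c := C (4 * α * (1 - α ^ 2) * (10 - 3 * α ^ 2)) with hc
  refine ⟨6 * C α ^ 2 * c - 56 * c + 6 * C α * (b + c * X ^ 3) ^ 2
    + 2 * X ^ 3 * (b + c * X ^ 3) ^ 3, ?_⟩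
  simp only [hb, hc, C_mul, C_sub, C_pow, C_1, C_ofNat]
  ring

namespace IsPainleveIISolution

variable {α : ℂ} {u u' : ℝ → ℂ}

theorem of_contDiff (hu : ContDiff ℝ 2 u)
    (hP : ∀ s : ℝ, deriv (deriv u) s = s * u s + 2 * u s ^ 3 - α) :
    IsPainleveIISolution α u (deriv u) where
  hasDerivAt s := (hu.differentiable two_ne_zero s).hasDerivAt
  hasDerivAt_deriv s := hP s ▸ (hu.differentiable_deriv_two s).hasDerivAt

theorem continuous (h : IsPainleveIISolution α u u') : Continuous u :=
  continuous_iff_continuousAt.2 fun s => (h.hasDerivAt s).continuousAt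

theorem exists_norm_eq_one_tendsto_normalizedExpPrimitive (h : IsPainleveIISolution α u u')
    (hα : α.re = 0) (hre : ∀ s, (u s).re = 0)
    (hu : HasExpansionAtTop u (painleveIISeries α) 10) :
    ∃ Λ : ℂ, ‖Λ‖ = 1 ∧ Tendsto (normalizedExpPrimitive α u) atTop (𝓝 Λ) := by
  obtain ⟨Λ, hΛ⟩ := exists_tendsto_normalizedExpPrimitive h.continuous
    ((hu.mono (show 2 ≤ 10 by norm_num)).congr_poly
      ⟨C (2 * α * (1 - α ^ 2)) * X ^ 2 + C (4 * α * (1 - α ^ 2) * (10 - 3 * α ^ 2)) * X ^ 5, by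
        rw [painleveIISeries]; ring⟩)
  refine ⟨Λ, tendsto_nhds_unique hΛ.norm ?_, hΛ⟩
  simp only [norm_normalizedExpPrimitive hα hre, tendsto_const_nhds]

theorem hasDerivAt_miura (h : IsPainleveIISolution α u u') (s : ℝ) :
    HasDerivAt (miura u u') (s * u s - α - 2 * u s * miura u u' s) s := by
  refine ((h.hasDerivAt_deriv s).fun_sub ((h.hasDerivAt s).fun_pow 2)).congr_deriv ?_
  rw [miura]
  push_cast
  ring

theorem hasDerivAt_expPrimitive_mul (h : IsPainleveIISolution α u u') (s : ℝ) :
    HasDerivAt (fun s : ℝ => expPrimitive u s * (s - 2 * miura u u' s))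
      ((1 + 2 * α) * expPrimitive u s) s := by
  refine ((hasDerivAt_expPrimitive h.continuous s).fun_mul
    ((hasDerivAt_id s).ofReal_comp.fun_sub ((h.hasDerivAt_miura s).const_mul 2))).congr_deriv ?_
  push_cast
  simp only [id]
  ring

theorem integral_expPrimitive (h : IsPainleveIISolution α u u') (s : ℝ) :
    (1 + 2 * α) * ∫ t in (0 : ℝ)..s, expPrimitive u t =
      expPrimitive u s * (s - 2 * miura u u' s) + 2 * miura u u' 0 := by
  have hcont : Continuous (expPrimitive u) := continuous_iff_continuousAt.2 fun t =>
    (hasDerivAt_expPrimitive h.continuous t).continuousAt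
  rw [← intervalIntegral.integral_const_mul,
    intervalIntegral.integral_eq_sub_of_hasDerivAt
      (fun t _ => h.hasDerivAt_expPrimitive_mul t)
      ((hcont.const_mul _).intervalIntegrable 0 s)]
  simp [expPrimitive]

theorem hasDerivAt_normalizedAntideriv (h : IsPainleveIISolution α u u') {s : ℝ} (hs : s ≠ 0) :
    HasDerivAt (normalizedAntideriv α u u')
      (2 * (1 + 2 * α) * ((s : ℂ)⁻¹ ^ 2 * miura u u' s * normalizedExpPrimitive α u s)) s := by
  have hs' : (s : ℂ) ≠ 0 := Complex.ofReal_ne_zero.2 hs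
  refine ((hasDerivAt_normalizedExpPrimitive α h.continuous hs).fun_mul
    ((((h.hasDerivAt_miura s).const_mul 2).fun_mul
      (hasDerivAt_inv hs').comp_ofReal).const_sub 1)).congr_deriv ?_
  field_simp
  ring

theorem hasExpansionAtTop_deriv (h : IsPainleveIISolution α u u')
    (hu : HasExpansionAtTop u (painleveIISeries α) 10) :
    HasExpansionAtTop u' (derivInv (painleveIISeries α)) 9 := by
  have hu9 := hu.mono (show 9 ≤ 10 by norm_num)
  refine hu9.of_hasDerivAt_of_hasDerivAt (.of_forall h.hasDerivAt)
    (.of_forall h.hasDerivAt_deriv) ?_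
  have hrhs := (((hu.ofReal_mul (by simp [painleveIISeries])).add
    ((hu9.pow 3).const_mul 2)).sub (HasExpansionAtTop.eval_inv (C α) 9)).congr_poly
    (X_pow_nine_dvd_painleveII_sub_derivInv α)
  simpa using hrhs

theorem hasExpansionAtTop_miura (h : IsPainleveIISolution α u u')
    (hu : HasExpansionAtTop u (painleveIISeries α) 10) :
    HasExpansionAtTop (miura u u')
      (X ^ 2 * -(C (α * (1 + α)) + C (4 * α * (1 - α ^ 2) * (2 + α)) * X ^ 3)) 8 := by
  refine (((h.hasExpansionAtTop_deriv hu).mono (show 8 ≤ 9 by norm_num)).sub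
    ((hu.mono (show 8 ≤ 10 by norm_num)).pow 2)).congr_poly ?_
  rw [derivInv_painleveIISeries, painleveIISeries]
  set c := C (4 * α * (1 - α ^ 2) * (10 - 3 * α ^ 2)) with hc
  refine ⟨-(7 * c + (C (2 * α * (1 - α ^ 2)) + c * X ^ 3) ^ 2 + 2 * C α * c), ?_⟩
  simp only [hc, C_mul, C_add, C_sub, C_pow, C_1, C_ofNat]
  ring

theorem tendsto_normalizedAntideriv {Λ : ℂ} (h : IsPainleveIISolution α u u')
    (hu : HasExpansionAtTop u (painleveIISeries α) 10)
    (hΛ : Tendsto (normalizedExpPrimitive α u) atTop (𝓝 Λ)) :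
    Tendsto (normalizedAntideriv α u u') atTop (𝓝 Λ) := by
  have hmiura : Tendsto (miura u u') atTop (𝓝 0) := by
    simpa using (h.hasExpansionAtTop_miura hu).tendsto (by norm_num)
  have hprod := hΛ.mul (((hmiura.const_mul 2).mul tendsto_ofReal_inv_atTop_zero).const_sub 1)
  rwa [mul_zero, sub_zero, mul_one] at hprod

theorem hasExpansionAtTop_normalizedAntideriv {Λ a₃ a₆ : ℂ} (h : IsPainleveIISolution α u u')
    (hu : HasExpansionAtTop u (painleveIISeries α) 10)
    (hΛ : Tendsto (normalizedExpPrimitive α u) atTop (𝓝 Λ))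
    (ha₃ : 3 * a₃ = 2 * α * (1 + α) * (1 + 2 * α) * Λ)
    (ha₆ : 3 * a₆ = (1 - α) * (12 + 4 * α - 2 * α ^ 2) * a₃) :
    HasExpansionAtTop (normalizedAntideriv α u u') (C Λ + C a₃ * X ^ 3 + C a₆ * X ^ 6) 9 := by
  have hweight := hasExpansionAtTop_normalizedExpPrimitive (b := 2 * α * (1 - α ^ 2) / 3)
    h.continuous ((hu.mono (show 7 ≤ 10 by norm_num)).congr_poly
      ⟨C (4 * α * (1 - α ^ 2) * (10 - 3 * α ^ 2)), by
        rw [painleveIISeries, mul_div_cancel₀ _ three_ne_zero]; ring⟩) hΛ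
  refine .of_hasDerivAt_of_tendsto ((eventually_ne_atTop 0).mono fun s hs =>
    h.hasDerivAt_normalizedAntideriv hs) (h.tendsto_normalizedAntideriv hu hΛ) (by simp) ?_
  have hinv_sq : HasExpansionAtTop (fun s => (s : ℂ)⁻¹ ^ 2) (X ^ 2 * 1) (2 + 8) := by
    convert HasExpansionAtTop.eval_inv (X ^ 2) 10 using 1
    · simp only [eval_pow, eval_X]
    · rw [mul_one]
  have hcoeff := hinv_sq.X_pow_mul_mul (h.hasExpansionAtTop_miura hu)
  rw [one_mul, ← mul_assoc, ← pow_add] at hcoeff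
  refine ((hcoeff.X_pow_mul_mul (n := 6) hweight).const_mul (2 * (1 + 2 * α))).congr_poly ?_
  have hX₄ := congrArg (C : ℂ → ℂ[X]) ha₃
  have hX₇ : C (2 * (1 + 2 * α)) * (C (4 * α * (1 - α ^ 2) * (2 + α)) * C Λ
      - C (α * (1 + α)) * C (2 * (2 * α * (1 - α ^ 2) / 3) * Λ)) = C (6 * a₆) := by
    rw [← C_mul, ← C_mul, ← C_sub, ← C_mul, C_inj]
    linear_combination (-(1 - α) * (8 + 8 / 3 * α - 4 / 3 * α ^ 2)) * ha₃ - 2 * ha₆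
  rw [map_add, map_add, derivInv_C, derivInv_C_mul_X_pow, derivInv_C_mul_X_pow]
  set D := C (2 * (2 * α * (1 - α ^ 2) / 3) * Λ)
  set B := C (4 * α * (1 - α ^ 2) * (2 + α))
  refine ⟨C (2 * (1 + 2 * α)) * B * D, ?_⟩
  simp only [C_mul, C_add, C_1, C_ofNat] at hX₄ hX₇ ⊢
  push_cast
  linear_combination X ^ 4 * hX₄ - X ^ 7 * hX₇

theorem exp_mul_sub_div_eq_normalizedAntideriv (h : IsPainleveIISolution α u u')
    (hα : 1 + 2 * α ≠ 0) {c x : ℝ} (hc : 0 < c) (hx : 0 < x) :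
    exp (-(2 * α) * Real.log x) *
        ((∫ y in (0 : ℝ)..x, exp (((2 / c : ℝ) : ℂ) * ∫ z in (0 : ℝ)..y, u (z / c)))
          - 2 * c / (1 + 2 * α) * miura u u' 0) / x =
      exp (-(2 * α) * Real.log c) / (1 + 2 * α) * normalizedAntideriv α u u' (x / c) := by
  have hx' : (x : ℂ) ≠ 0 := Complex.ofReal_ne_zero.2 hx.ne'
  have hc' : (c : ℂ) ≠ 0 := Complex.ofReal_ne_zero.2 hc.ne'
  have hintegral : ∫ t in (0 : ℝ)..x / c, expPrimitive u t =
      (expPrimitive u (x / c) * ((x / c : ℝ) - 2 * miura u u' (x / c)) + 2 * miura u u' 0)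
        / (1 + 2 * α) := by
    rw [← h.integral_expPrimitive, mul_div_cancel_left₀ _ hα]
  have hweight : exp (-(2 * α) * Real.log c) * normalizedExpPrimitive α u (x / c) =
      exp (-(2 * α) * Real.log x) * expPrimitive u (x / c) := by
    rw [normalizedExpPrimitive, expPrimitive, ← Complex.exp_add, ← Complex.exp_add,
      Real.log_div hx.ne' hc.ne']
    push_cast
    ring_nf
  rw [normalizedAntideriv, div_mul_eq_mul_div (exp _), ← mul_assoc, hweight,
    integral_exp_integral_comp_div hc.ne', hintegral]
  push_cast
  field_simp
  ring

theorem hasExpansionAtTop_rescaled {c : ℝ} {Λ A₀ q₁ q₂ : ℂ} (h : IsPainleveIISolution α u u')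
    (hu : HasExpansionAtTop u (painleveIISeries α) 10)
    (hΛ : Tendsto (normalizedExpPrimitive α u) atTop (𝓝 Λ)) (hα : 1 + 2 * α ≠ 0) (hc : 0 < c)
    (hA₀ : A₀ = exp (-(2 * α) * Real.log c) / (1 + 2 * α) * Λ)
    (hq₁ : 3 * q₁ = c ^ 3 * (2 * α * (1 + α) * (1 + 2 * α)))
    (hq₂ : 3 * q₂ = c ^ 3 * ((1 - α) * (12 + 4 * α - 2 * α ^ 2))) :
    HasExpansionAtTop
      (fun x => exp (-(2 * α) * Real.log x) *
        ((∫ y in (0 : ℝ)..x, exp (((2 / c : ℝ) : ℂ) * ∫ z in (0 : ℝ)..y, u (z / c)))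
          - 2 * c / (1 + 2 * α) * miura u u' 0) / x)
      (C A₀ + C (q₁ * A₀) * X ^ 3 + C (q₂ * (q₁ * A₀)) * X ^ 6) 9 := by
  have hexp := ((h.hasExpansionAtTop_normalizedAntideriv hu hΛ
    (mul_div_cancel₀ _ three_ne_zero) (mul_div_cancel₀ _ three_ne_zero)).comp_div hc).const_mul
      (exp (-(2 * α) * Real.log c) / (1 + 2 * α))
  convert hexp.congr' ((eventually_gt_atTop 0).mono fun x hx =>
    (h.exp_mul_sub_div_eq_normalizedAntideriv hα hc hx).symm) using 1
  rw [hA₀, (eq_div_iff three_ne_zero).2 ((mul_comm _ _).trans hq₁),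
    (eq_div_iff three_ne_zero).2 ((mul_comm _ _).trans hq₂)]
  simp only [add_comp, mul_comp, pow_comp, C_comp, X_comp, mul_add, mul_pow, ← C_pow, ← mul_assoc,
    ← C_mul]
  ring_nf

theorem exists_norm_eq_hasExpansionAtTop_rescaled {c : ℝ} {q₁ q₂ : ℂ}
    (h : IsPainleveIISolution α u u') (hu : HasExpansionAtTop u (painleveIISeries α) 10)
    (hα : α.re = 0) (hre : ∀ s, (u s).re = 0) (hc : 0 < c)
    (hq₁ : 3 * q₁ = c ^ 3 * (2 * α * (1 + α) * (1 + 2 * α)))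
    (hq₂ : 3 * q₂ = c ^ 3 * ((1 - α) * (12 + 4 * α - 2 * α ^ 2))) :
    ∃ A₀ : ℂ, ‖A₀‖ = ‖1 + 2 * α‖⁻¹ ∧ HasExpansionAtTop
      (fun x => exp (-(2 * α) * Real.log x) *
        ((∫ y in (0 : ℝ)..x, exp (((2 / c : ℝ) : ℂ) * ∫ z in (0 : ℝ)..y, u (z / c)))
          - 2 * c / (1 + 2 * α) * miura u u' 0) / x)
      (C A₀ + C (q₁ * A₀) * X ^ 3 + C (q₂ * (q₁ * A₀)) * X ^ 6) 9 := by
  have hα₀ : 1 + 2 * α ≠ 0 := fun h₀ => by simpa [hα] using congrArg Complex.re h₀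
  obtain ⟨Λ, hΛ_norm, hΛ⟩ := h.exists_norm_eq_one_tendsto_normalizedExpPrimitive hα hre hu
  refine ⟨_, ?_, h.hasExpansionAtTop_rescaled hu hΛ hα₀ hc rfl hq₁ hq₂⟩
  simp [hΛ_norm, Complex.norm_exp, hα]

end IsPainleveIISolution

section Constants

theorem exists_mem_Ico_eq_norm_mul_exp (z : ℂ) :
    ∃ θ ∈ Ico (0 : ℝ) (2 * Real.pi), z = ‖z‖ * exp (I * θ) := by
  have hperiodic : Function.Periodic (fun θ : ℝ => exp (I * θ)) (2 * Real.pi) := fun θ => by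
    simp only [mul_comm I]
    push_cast
    rw [add_mul, Complex.exp_periodic]
  obtain ⟨θ, hθ, hexp⟩ := hperiodic.exists_mem_Ico₀ Real.two_pi_pos z.arg
  exact ⟨θ, hθ, by rw [← hexp, mul_comm I, Complex.norm_mul_exp_arg_mul_I]⟩

theorem norm_one_sub_I_mul_inv (μ : ℝ) : ‖1 - I * μ‖⁻¹ = (1 + μ ^ 2) ^ (-(1 : ℝ) / 2) := by
  have hnorm : ‖1 - I * μ‖ = √(1 + μ ^ 2) := by
    rw [Complex.norm_def, Complex.normSq_apply]
    simp [sq]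
  rw [hnorm, Real.sqrt_eq_rpow, ← Real.rpow_neg (by positivity), neg_div]

theorem cbrt3_pos : 0 < cbrt3 := Real.rpow_pos_of_pos three_pos _

theorem cbrt3_pow_three : cbrt3 ^ 3 = 3 := by
  rw [cbrt3, ← Real.rpow_natCast, ← Real.rpow_mul zero_le_three]
  norm_num

end Constants

/-- Asymptotics of `g` as `x → +∞`:
`g(x) = Ã₀ + Ã₁ x⁻³ + Ã₂ x⁻⁶ + O(x⁻⁹)` with
`Ã₀ = (1+μ²)^{-1/2} e^{iθ̃₊}`, `Ã₁ = (iμ-1)(iμ+μ²/2) Ã₀`,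
`Ã₂ = (2+iμ)(μ²/4-iμ+6) Ã₁` for some `θ̃₊ ∈ [0,2π)`. -/
theorem stmt_9 (μ : ℝ) (α : ℂ) (hα : α = -Complex.I * μ / 2)
    (u : ℝ → ℂ) (hu : ContDiff ℝ (⊤ : ℕ∞) u)
    (hP : ∀ x : ℝ, deriv (deriv u) x = (x : ℂ) * u x + 2 * (u x) ^ 3 - α)
    (him : ∀ x : ℝ, (u x).re = 0)
    (hAp : ∃ x₀ : ℝ, 0 < x₀ ∧ ∃ K : ℝ, 0 < K ∧ ∀ x : ℝ, x₀ ≤ x →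
      ‖u x - α / x - 2 * α * (1 - α ^ 2) * (x : ℂ) ^ (-4 : ℤ)
        - 4 * α * (1 - α ^ 2) * (10 - 3 * α ^ 2) * (x : ℂ) ^ (-7 : ℤ)‖
        ≤ K * x ^ (-10 : ℤ))
    (Cc : ℂ)
    (hC : Cc = (2 * cbrt3 / (1 - Complex.I * μ)) * (deriv u 0 - (u 0) ^ 2))
    (w : ℝ → ℂ)
    (hw : ∀ x : ℝ, w x =
      (∫ y in (0:ℝ)..x, Complex.exp (((2 / cbrt3 : ℝ) : ℂ) *
        ∫ z in (0:ℝ)..y, u (z / cbrt3))) - Cc)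
    (g : ℝ → ℂ)
    (hg : ∀ x : ℝ, x ≠ 0 →
      g x = Complex.exp (Complex.I * μ * Real.log |x|) * w x / x) :
    ∃ θp : ℝ, θp ∈ Set.Ico (0:ℝ) (2 * Real.pi) ∧
    ∃ A0 A1 A2 : ℂ,
      A0 = (((1 + μ ^ 2) ^ (-(1:ℝ)/2) : ℝ) : ℂ) * Complex.exp (Complex.I * θp) ∧
      A1 = (Complex.I * μ - 1) * (Complex.I * μ + (μ:ℂ) ^ 2 / 2) * A0 ∧
      A2 = (2 + Complex.I * μ) * ((μ:ℂ) ^ 2 / 4 - Complex.I * μ + 6) * A1 ∧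
      ∃ x₁ : ℝ, 0 < x₁ ∧ ∃ K' : ℝ, 0 < K' ∧ ∀ x : ℝ, x₁ ≤ x →
        ‖g x - A0 - A1 * (x : ℂ) ^ (-3 : ℤ) - A2 * (x : ℂ) ^ (-6 : ℤ)‖
          ≤ K' * x ^ (-9 : ℤ) := by
  have hIμ : Complex.I * μ = -(2 * α) := by rw [hα]; ring
  have hμ_sq : (μ : ℂ) ^ 2 = -(2 * α) ^ 2 := by
    rw [← neg_sq (2 * α), ← hIμ, mul_pow, Complex.I_sq, neg_one_mul, neg_neg]
  have hcube : (cbrt3 : ℂ) ^ 3 = 3 := mod_cast cbrt3_pow_three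
  have hsol := IsPainleveIISolution.of_contDiff (hu.of_le (WithTop.coe_le_coe.2 le_top)) hP
  have hexp : HasExpansionAtTop u (painleveIISeries α) 10 := hasExpansionAtTop_iff.2 (by
    simpa [painleveIISeries, sub_sub, div_eq_mul_inv, zpow_neg] using hAp)
  obtain ⟨A₀, hA₀, hg_exp⟩ := hsol.exists_norm_eq_hasExpansionAtTop_rescaled hexp
    (q₁ := (Complex.I * μ - 1) * (Complex.I * μ + (μ : ℂ) ^ 2 / 2))
    (q₂ := (2 + Complex.I * μ) * ((μ : ℂ) ^ 2 / 4 - Complex.I * μ + 6))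
    (by simp [hα]) him cbrt3_pos (by rw [hcube, hIμ, hμ_sq]; ring) (by rw [hcube, hIμ, hμ_sq]; ring)
  obtain ⟨θ, hθ, hA₀θ⟩ := exists_mem_Ico_eq_norm_mul_exp A₀
  rw [hA₀, ← sub_neg_eq_add, ← hIμ, norm_one_sub_I_mul_inv] at hA₀θ
  refine ⟨θ, hθ, A₀, _, _, hA₀θ, rfl, rfl, ?_⟩
  have hg_expansion := hg_exp.congr' (g := g) <| (eventually_gt_atTop 0).mono fun x hx => by
    rw [hg x hx.ne', hw, hC, abs_of_pos hx, hIμ, sub_neg_eq_add, ← miura]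
  simpa [sub_sub, zpow_neg] using hasExpansionAtTop_iff.1 hg_expansion
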